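/- arXiv:0811.3530 — 2 statements merged into one kernel-verified Lean document; each statement's English description precedes it below -/
import Mathlib

section
/- Let F ∈ ℝ^{n×n} be similar over ℝ to a skew-symmetric matrix (i.e., there exist an invertible T ∈ ℝ^{n×n} and a skew-symmetric S ∈ ℝ^{n×n} with F = T S T⁻¹; equivalently, F is neutrally stable with all eigenvalues on the imaginary axis). Then the limit P := lim_{t→∞} t⁻¹ ∫₀ᵗ exp(Fᵀτ) exp(Fτ) dτ exists, P is symmetric positive definite, and PF + FᵀP = 0. -/
open Matrix Filter Topology

/-!
When `F` is similar to a skew-adjoint matrix, `exp (τ F)` is conjugate to a unitary group, hence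
bounded. The Gram family `exp (τ Fᴴ) exp (τ F)` is the orbit of `1` under the flow `exp (τ L)` of
the Lyapunov operator `L X = Fᴴ X + X F`, so this flow is bounded too. Along a bounded linear flow
the average of `exp (τ L) (L x)` over `[0, t]` is `t⁻¹ (exp (t L) x - x) → 0`, while vectors of
`ker L` are fixed. Hence `ker L ∩ range L = 0`, so in finite dimension the space is
`ker L ⊕ range L` and all averages converge into `ker L`, which is the Lyapunov equation. Finally
`‖exp (-τ F)‖ ≤ C` gives `1 ≤ C² exp (τ Fᴴ) exp (τ F)`; this closed convex condition passes to the
limit, which is therefore positive definite.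
-/

section MeanErgodic

open NormedSpace

variable {E : Type*} [NormedAddCommGroup E] [NormedSpace ℝ E] [CompleteSpace E]

lemma hasDerivAt_exp_smul_apply (L : E →L[ℝ] E) (x : E) (t : ℝ) :
    HasDerivAt (fun t : ℝ ↦ exp (t • L) x) (exp (t • L) (L x)) t := by
  simpa using (hasDerivAt_exp_smul_const L t).clm_apply (hasDerivAt_const t x)

lemma continuous_exp_smul_apply (L : E →L[ℝ] E) (x : E) :
    Continuous fun t : ℝ ↦ exp (t • L) x :=
  continuous_iff_continuousAt.mpr fun t ↦ (hasDerivAt_exp_smul_apply L x t).continuousAt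

lemma eq_exp_smul_apply_of_hasDerivAt {L : E →L[ℝ] E} {y : ℝ → E}
    (hy : ∀ t, HasDerivAt y (L (y t)) t) (t : ℝ) : y t = exp (t • L) (y 0) := by
  have hexp (s : ℝ) :
      HasDerivAt (fun t : ℝ ↦ exp (t • L) (y 0)) (L (exp (s • L) (y 0))) s := by
    simpa using (hasDerivAt_exp_smul_const' L s).clm_apply (hasDerivAt_const s (y 0))
  exact congrFun (ODE_solution_unique_univ (v := fun _ ↦ L) (s := fun _ ↦ Set.univ) (t₀ := 0)
    (fun _ ↦ L.lipschitz.lipschitzOnWith) (fun s ↦ ⟨hy s, trivial⟩)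
    (fun s ↦ ⟨hexp s, trivial⟩) (by simp)) t

lemma tendsto_average_exp_smul_of_map_eq_zero {L : E →L[ℝ] E} {x : E} (hx : L x = 0) :
    Tendsto (fun t : ℝ ↦ t⁻¹ • ∫ τ in (0 : ℝ)..t, exp (τ • L) x) atTop (𝓝 x) := by
  have hfix (t : ℝ) : exp (t • L) x = x :=
    (eq_exp_smul_apply_of_hasDerivAt (y := fun _ ↦ x)
      (fun s ↦ by simpa only [hx] using hasDerivAt_const s x) t).symm
  refine tendsto_const_nhds.congr' ?_
  filter_upwards [eventually_ne_atTop 0] with t ht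
  simp [hfix, ht]

lemma tendsto_average_exp_smul_map {L : E →L[ℝ] E} {x : E}
    (hx : atTop.IsBoundedUnder (· ≤ ·) fun t : ℝ ↦ ‖exp (t • L) x‖) :
    Tendsto (fun t : ℝ ↦ t⁻¹ • ∫ τ in (0 : ℝ)..t, exp (τ • L) (L x)) atTop (𝓝 0) := by
  have hint (t : ℝ) : ∫ τ in (0 : ℝ)..t, exp (τ • L) (L x) = exp (t • L) x - x := by
    simpa using intervalIntegral.integral_eq_sub_of_hasDerivAt
      (fun s _ ↦ hasDerivAt_exp_smul_apply L x s)
      ((continuous_exp_smul_apply L (L x)).intervalIntegrable 0 t)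
  have horbit := tendsto_inv_atTop_zero.zero_smul_isBoundedUnder_le hx
  have hinit := (tendsto_inv_atTop_zero (𝕜 := ℝ)).smul_const x
  simpa only [hint, smul_sub, zero_smul, sub_zero] using horbit.sub hinit

lemma disjoint_ker_range_of_bounded_exp {L : E →L[ℝ] E}
    (hL : ∀ x, atTop.IsBoundedUnder (· ≤ ·) fun t : ℝ ↦ ‖exp (t • L) x‖) :
    Disjoint L.ker L.range := by
  rw [Submodule.disjoint_def]
  rintro _ hker ⟨x, rfl⟩
  exact tendsto_nhds_unique (tendsto_average_exp_smul_of_map_eq_zero hker)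
    (tendsto_average_exp_smul_map (hL x))

omit [CompleteSpace E] in
theorem exists_tendsto_average_exp_smul [FiniteDimensional ℝ E] {L : E →L[ℝ] E}
    (hL : ∀ x, atTop.IsBoundedUnder (· ≤ ·) fun t : ℝ ↦ ‖exp (t • L) x‖) (x : E) :
    ∃ y, L y = 0 ∧
      Tendsto (fun t : ℝ ↦ t⁻¹ • ∫ τ in (0 : ℝ)..t, exp (τ • L) x) atTop (𝓝 y) := by
  have : CompleteSpace E := FiniteDimensional.complete ℝ E
  have hsup : L.ker ⊔ L.range = ⊤ :=
    Submodule.eq_top_of_disjoint _ _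
      (by rw [add_comm, LinearMap.finrank_range_add_finrank_ker])
      (disjoint_ker_range_of_bounded_exp hL)
  obtain ⟨y, hy, _, ⟨z, rfl⟩, rfl⟩ := Submodule.mem_sup.mp (hsup ▸ Submodule.mem_top (x := x))
  refine ⟨y, hy, ?_⟩
  have hsum (t : ℝ) : ∫ τ in (0 : ℝ)..t, exp (τ • L) (y + L z) =
      (∫ τ in (0 : ℝ)..t, exp (τ • L) y) + ∫ τ in (0 : ℝ)..t, exp (τ • L) (L z) := by
    simp only [map_add]
    exact intervalIntegral.integral_add
      ((continuous_exp_smul_apply L y).intervalIntegrable 0 t)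
      ((continuous_exp_smul_apply L (L z)).intervalIntegrable 0 t)
  simpa only [ContinuousLinearMap.coe_coe, hsum, smul_add, add_zero] using
    (tendsto_average_exp_smul_of_map_eq_zero hy).add (tendsto_average_exp_smul_map (hL z))

end MeanErgodic

lemma mem_of_tendsto_average {E : Type*} [NormedAddCommGroup E] [NormedSpace ℝ E]
    [CompleteSpace E] {s : Set E} (hs : Convex ℝ s) (hsc : IsClosed s) {f : ℝ → E}
    (hf : Continuous f) (hfs : ∀ τ, f τ ∈ s) {y : E}
    (hy : Tendsto (fun t : ℝ ↦ t⁻¹ • ∫ τ in (0 : ℝ)..t, f τ) atTop (𝓝 y)) : y ∈ s := by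
  refine hsc.mem_of_tendsto hy ?_
  filter_upwards [eventually_gt_atTop 0] with t ht
  have havg : ⨍ τ in (0 : ℝ)..t, f τ ∈ s := by
    rw [Set.uIoc_of_le ht.le]
    exact hs.set_average_mem hsc (by simp [ht]) (by simp) (.of_forall hfs)
      hf.integrableOn_Ioc
  rwa [interval_average_eq, sub_zero] at havg

lemma tendsto_average_map {E G : Type*} [NormedAddCommGroup E] [NormedSpace ℝ E]
    [CompleteSpace E] [NormedAddCommGroup G] [NormedSpace ℝ G] [CompleteSpace G] (L : E →L[ℝ] G)
    {f : ℝ → E} (hf : Continuous f) {y : E}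
    (hy : Tendsto (fun t : ℝ ↦ t⁻¹ • ∫ τ in (0 : ℝ)..t, f τ) atTop (𝓝 y)) :
    Tendsto (fun t : ℝ ↦ t⁻¹ • ∫ τ in (0 : ℝ)..t, L (f τ)) atTop (𝓝 (L y)) := by
  simpa only [Function.comp_def, map_smul,
    ← L.intervalIntegral_comp_comm (hf.intervalIntegrable _ _)]
    using (L.continuous.tendsto y).comp hy

section Sylvester

open NormedSpace

variable {A : Type*} [NormedRing A] [NormedAlgebra ℝ A]

/-- The Sylvester operator `x ↦ a x + x b` of a normed algebra; for `a = star b` it is the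
Lyapunov operator of `b`. -/
noncomputable def sylvesterOp (a b : A) : A →L[ℝ] A :=
  ContinuousLinearMap.mul ℝ A a + (ContinuousLinearMap.mul ℝ A).flip b

@[simp]
lemma sylvesterOp_apply (a b x : A) : sylvesterOp a b x = a * x + x * b := rfl

lemma exp_smul_sylvesterOp_apply [CompleteSpace A] (a b x : A) (t : ℝ) :
    exp (t • sylvesterOp a b) x = exp (t • a) * x * exp (t • b) := by
  have hderiv (s : ℝ) : HasDerivAt (fun t : ℝ ↦ exp (t • a) * x * exp (t • b))
      (sylvesterOp a b (exp (s • a) * x * exp (s • b))) s := by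
    refine (((hasDerivAt_exp_smul_const' (𝕂 := ℝ) a s).mul_const x).mul
      (hasDerivAt_exp_smul_const (𝕂 := ℝ) b s)).congr_deriv ?_
    simp only [sylvesterOp_apply, mul_assoc]
  simpa using (eq_exp_smul_apply_of_hasDerivAt hderiv t).symm

lemma norm_exp_smul_sylvesterOp_apply_le [CompleteSpace A] {a b : A} {C D t : ℝ}
    (ha : ‖exp (t • a)‖ ≤ C) (hb : ‖exp (t • b)‖ ≤ D) (x : A) :
    ‖exp (t • sylvesterOp a b) x‖ ≤ C * ‖x‖ * D := by
  rw [exp_smul_sylvesterOp_apply]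
  have hC : 0 ≤ C := (norm_nonneg _).trans ha
  exact norm_mul₃_le.trans (by gcongr)

end Sylvester

section Matrix

open NormedSpace
open scoped Matrix.Norms.L2Operator ComplexOrder MatrixOrder

variable {𝕜 ι : Type*} [RCLike 𝕜] [Fintype ι] [DecidableEq ι]

/-- The `L²` operator norm as a real algebra norm. It extends the entrywise `ℝ`-algebra structure,
whereas `NormedAlgebra.restrictScalars` would create a second one. -/
noncomputable local instance realL2OpNormedAlgebra : NormedAlgebra ℝ (Matrix ι ι 𝕜) where
  norm_smul_le r A := by
    rw [← algebraMap_smul 𝕜 r A]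
    exact (norm_smul_le _ _).trans_eq (by simp)

lemma conjTranspose_mul_self_le (A : Matrix ι ι 𝕜) : Aᴴ * A ≤ algebraMap ℝ _ (‖A‖ ^ 2) := by
  nontriviality (Matrix ι ι 𝕜)
  rw [sq, ← l2_opNorm_conjTranspose_mul_self]
  exact le_algebraMap_of_spectrum_le
    (fun r hr ↦ (Real.le_norm_self r).trans (spectrum.norm_le_norm_of_mem hr))
    (isHermitian_conjTranspose_mul_self A)

lemma one_le_smul_conjTranspose_mul_self {A B : Matrix ι ι 𝕜} {C : ℝ} (hBA : B * A = 1)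
    (hB : ‖B‖ ≤ C) : 1 ≤ C ^ 2 • (Aᴴ * A) := by
  have hle : Bᴴ * B ≤ algebraMap ℝ _ (C ^ 2) :=
    (conjTranspose_mul_self_le B).trans (algebraMap_mono _ (by gcongr))
  calc (1 : Matrix ι ι 𝕜) = Aᴴ * (Bᴴ * B) * A := by
        rw [mul_assoc, mul_assoc, hBA, mul_one, ← conjTranspose_mul, hBA, conjTranspose_one]
    _ ≤ Aᴴ * algebraMap ℝ _ (C ^ 2) * A := star_left_conjugate_le_conjugate hle A
    _ = C ^ 2 • (Aᴴ * A) := by simp [Algebra.algebraMap_eq_smul_one]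

omit [Fintype ι] [DecidableEq ι] in
lemma isClosed_setOf_posSemidef : IsClosed {A : Matrix ι ι 𝕜 | A.PosSemidef} := by
  simp only [PosSemidef, Finsupp.sum, IsHermitian, Set.ofPred_and, Set.ofPred_forall]
  exact (isClosed_eq (by fun_prop) (by fun_prop)).inter <|
    isClosed_iInter fun x ↦ isClosed_le (by fun_prop) (by fun_prop)

omit [Fintype ι] in
lemma posDef_of_one_le_smul {A : Matrix ι ι 𝕜} {c : ℝ} (hc : 0 < c) (hA : 1 ≤ c • A) :
    A.PosDef := by
  have hcA : (c • A).PosDef := by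
    simpa using PosDef.posSemidef_add (Matrix.le_iff.mp hA) PosDef.one
  simpa [smul_smul, hc.ne'] using hcA.smul (inv_pos.mpr hc)

lemma isBounded_range_exp_smul_conj {T S : Matrix ι ι 𝕜} (hT : IsUnit T)
    (hS : S ∈ skewAdjoint (Matrix ι ι 𝕜)) :
    Bornology.IsBounded (Set.range fun t : ℝ ↦ exp (t • (T * S * T⁻¹))) := by
  let _ : NormedAlgebra ℚ (Matrix ι ι 𝕜) := .restrictScalars ℚ ℝ _
  refine isBounded_iff_forall_norm_le.mpr ⟨‖T‖ * ‖T⁻¹‖, Set.forall_mem_range.mpr fun t ↦ ?_⟩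
  have hunitary : exp (t • S) ∈ unitary (Matrix ι ι 𝕜) :=
    exp_mem_unitary_of_mem_skewAdjoint (skewAdjoint.smul_mem t hS)
  calc ‖exp (t • (T * S * T⁻¹))‖ = ‖T * exp (t • S) * T⁻¹‖ := by
        rw [← Matrix.exp_conj T _ hT, mul_smul_comm, smul_mul_assoc]
    _ ≤ ‖T * exp (t • S)‖ * ‖T⁻¹‖ := norm_mul_le _ _
    _ = ‖T‖ * ‖T⁻¹‖ := by rw [CStarRing.norm_mul_mem_unitary T hunitary]

omit [Fintype ι] in
lemma convex_setOf_one_le_smul (c : ℝ) : Convex ℝ {A : Matrix ι ι 𝕜 | 1 ≤ c • A} := by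
  intro A hA B hB a b ha hb hab
  have hcomb : c • (a • A + b • B) - 1 = a • (c • A - 1) + b • (c • B - 1) := by
    rw [smul_add, smul_comm c a, smul_comm c b, smul_sub, smul_sub, sub_add_sub_comm,
      ← add_smul, hab, one_smul]
  rw [Set.mem_ofPred_eq, Matrix.le_iff, hcomb]
  exact (PosSemidef.smul hA ha).add (PosSemidef.smul hB hb)

omit [Fintype ι] in
lemma isClosed_setOf_one_le_smul (c : ℝ) : IsClosed {A : Matrix ι ι 𝕜 | 1 ≤ c • A} :=
  isClosed_setOf_posSemidef.preimage (f := fun A : Matrix ι ι 𝕜 ↦ c • A - 1) (by fun_prop)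

lemma continuous_exp_smul_conjTranspose_mul_exp_smul (F : Matrix ι ι 𝕜) :
    Continuous fun τ : ℝ ↦ exp (τ • Fᴴ) * exp (τ • F) :=
  (differentiable_exp_smul_const ℝ Fᴴ).continuous.mul
    (differentiable_exp_smul_const ℝ F).continuous

lemma exp_smul_conjTranspose (F : Matrix ι ι 𝕜) (t : ℝ) : exp (t • Fᴴ) = (exp (t • F))ᴴ := by
  rw [← exp_conjTranspose, conjTranspose_smul, star_trivial]

lemma exp_neg_smul_mul_exp_smul (F : Matrix ι ι 𝕜) (t : ℝ) :
    exp (-t • F) * exp (t • F) = 1 := by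
  rw [← Matrix.exp_add_of_commute _ _ (((Commute.refl F).smul_left _).smul_right _),
    ← add_smul, neg_add_cancel, zero_smul, exp_zero]

lemma one_le_smul_exp_conjTranspose_mul_exp {F : Matrix ι ι 𝕜} {C t : ℝ}
    (hFC : ‖exp (-t • F)‖ ≤ C) : 1 ≤ C ^ 2 • (exp (t • Fᴴ) * exp (t • F)) := by
  rw [exp_smul_conjTranspose]
  exact one_le_smul_conjTranspose_mul_self (exp_neg_smul_mul_exp_smul F t) hFC

lemma posDef_of_tendsto_average_gram {F P : Matrix ι ι 𝕜}
    (hF : Bornology.IsBounded (Set.range fun t : ℝ ↦ exp (t • F)))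
    (hP : Tendsto (fun t : ℝ ↦ t⁻¹ • ∫ τ in (0 : ℝ)..t, exp (τ • Fᴴ) * exp (τ • F))
      atTop (𝓝 P)) : P.PosDef := by
  obtain ⟨C, hC, hFC⟩ := hF.exists_pos_norm_le
  have hgram (τ : ℝ) : exp (τ • Fᴴ) * exp (τ • F) ∈ {A : Matrix ι ι 𝕜 | 1 ≤ C ^ 2 • A} :=
    one_le_smul_exp_conjTranspose_mul_exp (hFC _ ⟨-τ, rfl⟩)
  have hPC : P ∈ {A : Matrix ι ι 𝕜 | 1 ≤ C ^ 2 • A} :=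
    mem_of_tendsto_average (E := Matrix ι ι 𝕜) (convex_setOf_one_le_smul _)
      (isClosed_setOf_one_le_smul _) (continuous_exp_smul_conjTranspose_mul_exp_smul F) hgram hP
  exact posDef_of_one_le_smul (by positivity) hPC

theorem exists_tendsto_average_gram {F : Matrix ι ι 𝕜}
    (hF : Bornology.IsBounded (Set.range fun t : ℝ ↦ exp (t • F))) :
    ∃ P : Matrix ι ι 𝕜, Fᴴ * P + P * F = 0 ∧
      Tendsto (fun t : ℝ ↦ t⁻¹ • ∫ τ in (0 : ℝ)..t, exp (τ • Fᴴ) * exp (τ • F))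
        atTop (𝓝 P) := by
  obtain ⟨C, hFC⟩ := isBounded_iff_forall_norm_le.mp hF
  have hbdd (t : ℝ) : ‖exp (t • F)‖ ≤ C := hFC _ ⟨t, rfl⟩
  have hbdd_star (t : ℝ) : ‖exp (t • Fᴴ)‖ ≤ C := by
    rw [exp_smul_conjTranspose, l2_opNorm_conjTranspose]
    exact hbdd t
  simpa only [exp_smul_sylvesterOp_apply, mul_one, sylvesterOp_apply] using
    exists_tendsto_average_exp_smul (L := sylvesterOp Fᴴ F) (fun X ↦
      isBoundedUnder_of ⟨_, fun t ↦ norm_exp_smul_sylvesterOp_apply_le (hbdd_star t) (hbdd t) X⟩) 1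

theorem average_gram_limit_exists_posDef_general {F : Matrix ι ι 𝕜}
    (hF : Bornology.IsBounded (Set.range fun t : ℝ ↦ exp (t • F))) :
    ∃ P : Matrix ι ι 𝕜, P.PosDef ∧
      (∀ i j, Tendsto (fun t : ℝ ↦ t⁻¹ • ∫ τ in (0 : ℝ)..t, (exp (τ • Fᴴ) * exp (τ • F)) i j)
        atTop (𝓝 (P i j))) ∧
      P * F + Fᴴ * P = 0 := by
  obtain ⟨P, hlyap, hlim⟩ := exists_tendsto_average_gram hF
  refine ⟨P, posDef_of_tendsto_average_gram hF hlim, fun i j ↦ ?_, by rwa [add_comm]⟩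
  let entry : Matrix ι ι 𝕜 →L[ℝ] 𝕜 := (entryLinearMap ℝ 𝕜 i j).toContinuousLinearMap
  exact tendsto_average_map entry (continuous_exp_smul_conjTranspose_mul_exp_smul F) hlim

end Matrix

/-- If `F` is similar over `ℝ` to a skew-symmetric matrix, then
`P = lim_{t→∞} t⁻¹ ∫₀ᵗ exp(Fᵀτ) exp(Fτ) dτ` exists (entrywise), is symmetric
positive definite, and satisfies `PF + FᵀP = 0`. -/
theorem average_gram_limit_exists_posDef
    (n : ℕ) (F T S : Matrix (Fin n) (Fin n) ℝ)
    (hT : IsUnit T) (hS : S + Sᵀ = 0) (hF : F = T * S * T⁻¹) :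
    ∃ P : Matrix (Fin n) (Fin n) ℝ, Pᵀ = P ∧ P.PosDef ∧
      (∀ i j, Tendsto (fun t : ℝ => t⁻¹ * ∫ τ in (0 : ℝ)..t,
          (NormedSpace.exp (τ • Fᵀ) * NormedSpace.exp (τ • F)) i j)
        atTop (nhds (P i j))) ∧
      P * F + Fᵀ * P = 0 := by
  obtain ⟨P, hP, hlim⟩ := average_gram_limit_exists_posDef_general
    (hF ▸ isBounded_range_exp_smul_conj hT (neg_eq_of_add_eq_zero_right hS).symm)
  exact ⟨P, hP.isHermitian, hP, hlim⟩
end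

section
/- Let A ∈ ℝ^{n×n} be neutrally stable and let C ∈ ℝ^{m×n} be such that the pair (C,A) is detectable. Then there exists L ∈ ℝ^{n×m} such that for every p, every connected interconnection Γ ∈ ℝ^{p×p}, every r ∈ ℝ^p with rᵀΓ = 0 and rᵀ1 = 1, and every initial vector x(0) ∈ ℝ^{pn}, the solution x(t) = exp(t(I_p ⊗ A + Γ ⊗ LC)) x(0) satisfies |x(t) − (1rᵀ ⊗ exp(tA)) x(0)| → 0 as t → ∞; in particular the blocks x_i(t) synchronize to x̄(t) = (rᵀ ⊗ exp(tA)) x(0). -/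
open Matrix Filter Topology
open scoped Kronecker

/-- `Γ` is an interconnection: off-diagonal entries are nonnegative and each diagonal
entry is minus the sum of the other entries in its row (equivalently, rows sum to zero). -/
def IsInterconnection {p : ℕ} (Γ : Matrix (Fin p) (Fin p) ℝ) : Prop :=
  (∀ i j, i ≠ j → 0 ≤ Γ i j) ∧ ∀ i, ∑ j, Γ i j = 0

/-- `Γ` is a connected interconnection: it is an interconnection and its graph
(with an edge `(i, j)` whenever `Γ i j > 0`) has a node reachable by a directed
path from every other node. -/
def IsConnectedInterconnection {p : ℕ} (Γ : Matrix (Fin p) (Fin p) ℝ) : Prop :=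
  IsInterconnection Γ ∧
    ∃ k : Fin p, ∀ i : Fin p, Relation.ReflTransGen (fun a b => 0 < Γ a b) i k

/-!
Let `Q` be the projection `1rᵀ ⊗ I`. It commutes with `I ⊗ A + Γ ⊗ LC`, whose exponential it turns
into `1rᵀ ⊗ exp(tA)`, so the claim is that the exponential decays on `ker Q`. An eigenvector there
can be chosen in an eigenspace of `Γ ⊗ I` as well; its eigenvalue is then one of `A + σ L C`, where
`σ` is an eigenvalue of `Γ` with an eigenvector orthogonal to `r`. By Gershgorin's theorem
`Re σ < 0` or `σ = 0`, and `σ = 0` is excluded by the maximum principle on the graph of `Γ`.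

It remains to choose `L` such that `A + σ L C` is Hurwitz whenever `Re σ < 0`. Take a real `Y ≥ 0`
built from the eigenvectors of `A` on the imaginary axis, so that `A Y + Y Aᵀ = 0`, and `L = Y Cᵀ`.
If `w` is an eigenvector of `(A + σ L C)*` with eigenvalue `μ`, then
`Re μ · w* Y w = Re σ · |C Y w|²`. For `Re μ ≥ 0` both sides vanish, so `C Y w = 0` and `w` is an
eigenvector of `Aᵀ`, on the imaginary axis by stability. Detectability gives `Y w = 0`, hence `w` is
orthogonal to the corresponding eigenvectors of `A`, which contradicts semisimplicity.
-/

section Complexification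

variable {ι κ : Type*}

theorem conjTranspose_map_ofReal (M : Matrix ι κ ℝ) :
    (M.map Complex.ofReal)ᴴ = (M.map Complex.ofReal)ᵀ := by
  ext i j
  simp

theorem map_ofReal_exp_smul [Fintype ι] [DecidableEq ι] (A : Matrix ι ι ℝ) (t : ℝ) :
    (NormedSpace.exp (t • A)).map Complex.ofReal =
      NormedSpace.exp (t • A.map Complex.ofReal) := by
  have hexp : (NormedSpace.exp (t • A)).map Complex.ofReal =
      NormedSpace.exp ((t • A).map Complex.ofReal) :=
    open scoped Norms.Operator in
    NormedSpace.map_exp (Complex.ofRealHom.mapMatrix : Matrix ι ι ℝ →+* Matrix ι ι ℂ)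
      (continuous_id.matrix_map Complex.continuous_ofReal) (t • A)
  rw [hexp]
  congr 1
  ext i j
  simp

variable [Fintype κ]

theorem re_map_ofReal_mulVec (M : Matrix ι κ ℝ) (z : κ → ℂ) (i : ι) :
    ((M.map Complex.ofReal *ᵥ z) i).re = (M *ᵥ fun j => (z j).re) i := by
  simp [mulVec, dotProduct]

theorem im_map_ofReal_mulVec (M : Matrix ι κ ℝ) (z : κ → ℂ) (i : ι) :
    ((M.map Complex.ofReal *ᵥ z) i).im = (M *ᵥ fun j => (z j).im) i := by
  simp [mulVec, dotProduct]

end Complexification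

section Exponential

open scoped Nat

variable {ι κ 𝕂 : Type*} [Fintype ι] [DecidableEq ι] [Fintype κ] [DecidableEq κ] [RCLike 𝕂]

theorem semiconjBy_exp {X M N : Matrix ι ι 𝕂} (h : SemiconjBy X M N) :
    SemiconjBy X (NormedSpace.exp M) (NormedSpace.exp N) :=
  open scoped Norms.Operator in h.exp_right

theorem exp_one_kronecker (A : Matrix ι ι 𝕂) :
    NormedSpace.exp ((1 : Matrix κ κ 𝕂) ⊗ₖ A) = 1 ⊗ₖ NormedSpace.exp A := by
  let f : Matrix ι ι 𝕂 →+* Matrix (κ × ι) (κ × ι) 𝕂 :=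
    { toFun := fun B => 1 ⊗ₖ B
      map_one' := one_kronecker_one
      map_mul' := fun B B' => by rw [← mul_kronecker_mul, one_mul]
      map_zero' := kronecker_zero 1
      map_add' := kronecker_add 1 }
  have hf : Continuous f :=
    continuous_matrix fun _ _ => continuous_const.mul (continuous_id.matrix_elem _ _)
  open scoped Norms.Operator in exact (NormedSpace.map_exp f hf A).symm

theorem hasSum_exp_mulVec (M : Matrix ι ι 𝕂) (x : ι → 𝕂) :
    HasSum (fun k : ℕ => (k ! : 𝕂)⁻¹ • (M ^ k *ᵥ x)) (NormedSpace.exp M *ᵥ x) := by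
  have hexp : HasSum (fun k : ℕ => (k ! : 𝕂)⁻¹ • M ^ k) (NormedSpace.exp M) :=
    open scoped Norms.Operator in NormedSpace.exp_series_hasSum_exp' M
  have hcont : Continuous fun N : Matrix ι ι 𝕂 => N *ᵥ x :=
    continuous_id.matrix_mulVec continuous_const
  simpa [Function.comp_def, smul_mulVec] using
    hexp.map ((mulVecBilin 𝕂 𝕂).flip x) hcont

theorem exp_mulVec_of_pow_mulVec_eq_zero {N : Matrix ι ι 𝕂} {x : ι → 𝕂} {k : ℕ}
    (h : N ^ k *ᵥ x = 0) :
    NormedSpace.exp N *ᵥ x = ∑ j ∈ Finset.range k, (j ! : 𝕂)⁻¹ • (N ^ j *ᵥ x) := by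
  refine (hasSum_exp_mulVec N x).unique (hasSum_sum_of_ne_finset_zero fun j hj => ?_)
  obtain ⟨d, rfl⟩ := Nat.exists_eq_add_of_le (Finset.mem_range.not.1 hj |> not_lt.1)
  rw [add_comm, pow_add, ← mulVec_mulVec, h, mulVec_zero, smul_zero]

theorem exp_eq_exp_smul_exp_sub (M : Matrix ι ι ℂ) (μ : ℂ) :
    NormedSpace.exp M = Complex.exp μ • NormedSpace.exp (M - μ • 1) := by
  have hscalar : NormedSpace.exp (μ • (1 : Matrix ι ι ℂ)) = Complex.exp μ • 1 := by
    rw [smul_one_eq_diagonal, exp_diagonal, smul_one_eq_diagonal, Complex.exp_eq_exp_ℂ]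
    congr 1
    ext i
    exact Pi.coe_exp _ _
  rw [← one_mul (NormedSpace.exp (M - μ • 1)), ← smul_mul_assoc, ← hscalar,
    ← exp_add_of_commute _ _ ((Commute.one_left _).smul_left μ), add_sub_cancel]

theorem exp_smul_mulVec_of_pow_mulVec_eq_zero {M : Matrix ι ι ℂ} {μ : ℂ} {x : ι → ℂ} {k : ℕ}
    (h : (M - μ • 1) ^ k *ᵥ x = 0) (t : ℝ) :
    NormedSpace.exp (t • M) *ᵥ x = ∑ j ∈ Finset.range k,
      ((t : ℂ) ^ j * Complex.exp (t * μ)) • ((j ! : ℂ)⁻¹ • ((M - μ • 1) ^ j *ᵥ x)) := by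
  have hpow (j : ℕ) : (t • M - (t * μ) • 1) ^ j = (t : ℂ) ^ j • (M - μ • 1) ^ j := by
    rw [← smul_pow, smul_sub, smul_smul, Complex.coe_smul]
  rw [exp_eq_exp_smul_exp_sub _ (t * μ), smul_mulVec,
    exp_mulVec_of_pow_mulVec_eq_zero (k := k) (by rw [hpow, smul_mulVec, h, smul_zero]),
    Finset.smul_sum]
  refine Finset.sum_congr rfl fun j _ => ?_
  simp only [hpow, smul_mulVec, smul_smul]
  ring_nf

theorem exp_smul_mulVec_of_mulVec_eq_smul {M : Matrix ι ι ℂ} {μ : ℂ} {x : ι → ℂ}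
    (h : M *ᵥ x = μ • x) (t : ℝ) :
    NormedSpace.exp (t • M) *ᵥ x = Complex.exp (t * μ) • x := by
  have hker : (M - μ • 1) ^ 1 *ᵥ x = 0 := by
    rw [pow_one, sub_mulVec, h, smul_mulVec, one_mulVec, sub_self]
  simp [exp_smul_mulVec_of_pow_mulVec_eq_zero hker]

theorem tendsto_pow_mul_exp_mul_atTop_nhds_zero {μ : ℂ} (hμ : μ.re < 0) (j : ℕ) :
    Tendsto (fun t : ℝ => (t : ℂ) ^ j * Complex.exp (t * μ)) atTop (𝓝 0) := by
  rw [tendsto_zero_iff_norm_tendsto_zero]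
  refine (tendsto_rpow_mul_exp_neg_mul_atTop_nhds_zero j (-μ.re) (neg_pos.2 hμ)).congr' ?_
  filter_upwards [eventually_ge_atTop 0] with t ht
  rw [norm_mul, norm_pow, Complex.norm_real, Real.norm_of_nonneg ht, Complex.norm_exp,
    Complex.re_ofReal_mul, Real.rpow_natCast, neg_neg, mul_comm μ.re]

end Exponential

section Hurwitz

open scoped Nat

variable {ι : Type*} [Fintype ι] [DecidableEq ι]

/-- A complex matrix is Hurwitz if its spectrum lies in the open left half-plane, that is, if
`ẋ = M x` is asymptotically stable. -/
def IsHurwitz (M : Matrix ι ι ℂ) : Prop :=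
  ∀ μ ∈ spectrum ℂ M, μ.re < 0

theorem mem_spectrum_iff_exists_mulVec_eq_smul {K : Type*} [Field K] {M : Matrix ι ι K} {μ : K} :
    μ ∈ spectrum K M ↔ ∃ v, v ≠ 0 ∧ M *ᵥ v = μ • v := by
  rw [← spectrum_toLin', ← Module.End.hasEigenvalue_iff_mem_spectrum]
  refine ⟨fun h => ?_, fun ⟨v, hv, h⟩ => ?_⟩
  · obtain ⟨v, hv⟩ := h.exists_hasEigenvector
    exact ⟨v, hv.2, hv.apply_eq_smul⟩
  · exact Module.End.hasEigenvalue_of_hasEigenvector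
      (Module.End.hasEigenvector_iff.2 ⟨Module.End.mem_eigenspace_iff.2 h, hv⟩)

theorem IsHurwitz.tendsto_exp_smul_mulVec {M : Matrix ι ι ℂ} (hM : IsHurwitz M) (x : ι → ℂ) :
    Tendsto (fun t : ℝ => NormedSpace.exp (t • M) *ᵥ x) atTop (𝓝 0) := by
  have hx : x ∈ ⨆ μ, Module.End.maxGenEigenspace (toLin' M) μ := by
    rw [Module.End.iSup_maxGenEigenspace_eq_top]
    trivial
  induction hx using Submodule.iSup_induction' with
  | zero => simp
  | add y z _ _ hy hz => simpa only [mulVec_add, add_zero] using hy.add hz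
  | mem μ y hy =>
    obtain rfl | hy0 := eq_or_ne y 0
    · simp
    obtain ⟨k, hk⟩ := (Module.End.mem_maxGenEigenspace _ μ y).1 hy
    have hyM : Module.End.HasUnifEigenvector (toLin' M) μ ⊤ y := ⟨hy, hy0⟩
    have hμ : μ.re < 0 := hM μ <| spectrum_toLin' M ▸
      Module.End.HasEigenvalue.mem_spectrum (hyM.hasUnifEigenvalue.lt zero_lt_one)
    have hk' : (M - μ • 1) ^ k *ᵥ y = 0 := by
      rwa [Module.End.one_eq_id, ← toLin'_one, ← map_smul, ← map_sub, ← toLin'_pow,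
        toLin'_apply] at hk
    simp_rw [exp_smul_mulVec_of_pow_mulVec_eq_zero hk']
    rw [← Finset.sum_const_zero (s := Finset.range k)]
    refine tendsto_finsetSum _ fun j _ => ?_
    simpa only [zero_smul] using
      (tendsto_pow_mul_exp_mul_atTop_nhds_zero hμ j).smul_const
        ((j ! : ℂ)⁻¹ • ((M - μ • 1) ^ j *ᵥ y))

theorem IsHurwitz.tendsto_exp_smul {M : Matrix ι ι ℂ} (hM : IsHurwitz M) :
    Tendsto (fun t : ℝ => NormedSpace.exp (t • M)) atTop (𝓝 0) := by
  refine tendsto_pi_nhds.2 fun i => tendsto_pi_nhds.2 fun j => ?_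
  simpa using tendsto_pi_nhds.1 (hM.tendsto_exp_smul_mulVec (Pi.single j 1)) i

theorem tendsto_exp_smul_mul_one_sub {M Q : Matrix ι ι ℂ} (hQ : IsIdempotentElem Q)
    (hMQ : Commute M Q) (hM : ∀ (μ : ℂ) v, v ≠ 0 → M *ᵥ v = μ • v → Q *ᵥ v = 0 → μ.re < 0) :
    Tendsto (fun t : ℝ => NormedSpace.exp (t • M) * (1 - Q)) atTop (𝓝 0) := by
  -- `N` agrees with `M` on `ker Q` and is `-1` on `range Q`, which makes it Hurwitz.
  set N := M * (1 - Q) - Q with hN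
  have hQN : Q * N = -Q := by
    rw [hN, mul_sub, ← mul_assoc, ← hMQ.eq, mul_assoc, hQ.mul_one_sub_self, mul_zero, hQ.eq,
      zero_sub]
  have hHurwitz : IsHurwitz N := by
    intro μ hμ
    obtain ⟨v, hv, hNv⟩ := mem_spectrum_iff_exists_mulVec_eq_smul.1 hμ
    have hQv : (μ + 1) • (Q *ᵥ v) = 0 := by
      rw [add_smul, ← mulVec_smul, ← hNv, mulVec_mulVec, hQN, neg_mulVec, one_smul,
        neg_add_cancel]
    rcases smul_eq_zero.1 hQv with hμ | hQv
    · rw [eq_neg_of_add_eq_zero_left hμ]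
      norm_num
    · refine hM μ v hv ?_ hQv
      rw [← hNv, hN, sub_mulVec, ← mulVec_mulVec, sub_mulVec, hQv, one_mulVec, sub_zero, sub_zero]
  have hsemiconj (t : ℝ) : SemiconjBy (1 - Q) (t • N) (t • M) := by
    refine SemiconjBy.smul_right ?_ t
    rw [SemiconjBy, sub_mul, hQN, one_mul, hN, sub_neg_eq_add, sub_add_cancel]
  have hexp (t : ℝ) : (1 - Q) * NormedSpace.exp (t • N) = NormedSpace.exp (t • M) * (1 - Q) :=
    semiconjBy_exp (hsemiconj t)
  simpa only [hexp, mul_zero] using hHurwitz.tendsto_exp_smul.const_mul (1 - Q)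

end Hurwitz

section Synchronization

variable {ι n : Type*} [Fintype ι] [Fintype n]

theorem exists_common_eigenvector {K : Type*} [Field K] [IsAlgClosed K] {M G Q : Matrix ι ι K}
    (hM : Commute M G) (hQ : Commute Q G) {l : K} {v : ι → K} (hv : v ≠ 0)
    (hMv : M *ᵥ v = l • v) (hQv : Q *ᵥ v = 0) :
    ∃ (σ : K) (x : ι → K), x ≠ 0 ∧ M *ᵥ x = l • x ∧ Q *ᵥ x = 0 ∧ G *ᵥ x = σ • x := by
  let W : Submodule K (ι → K) := Module.End.eigenspace M.mulVecLin l ⊓ LinearMap.ker Q.mulVecLin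
  have mem_W {x : ι → K} : x ∈ W ↔ M *ᵥ x = l • x ∧ Q *ᵥ x = 0 := by
    simp [W]
  have hGW : ∀ x ∈ W, G.mulVecLin x ∈ W := fun x hx => by
    obtain ⟨hMx, hQx⟩ := mem_W.1 hx
    rw [mulVecLin_apply, mem_W, mulVec_mulVec, mulVec_mulVec, hM.eq, hQ.eq, ← mulVec_mulVec,
      ← mulVec_mulVec, hMx, hQx, mulVec_smul, mulVec_zero]
    exact ⟨rfl, rfl⟩
  have : Nontrivial W := ⟨⟨v, mem_W.2 ⟨hMv, hQv⟩⟩, 0, fun h => hv (congrArg Subtype.val h)⟩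
  obtain ⟨σ, hσ⟩ := Module.End.exists_eigenvalue (G.mulVecLin.restrict hGW)
  obtain ⟨x, hx⟩ := hσ.exists_hasEigenvector
  exact ⟨σ, x, fun h => hx.2 (Subtype.ext h), (mem_W.1 x.2).1, (mem_W.1 x.2).2,
    congrArg Subtype.val hx.apply_eq_smul⟩

variable [DecidableEq ι] [DecidableEq n]

theorem exists_eigenvector_of_kronecker_mulVec_eq_smul {A D : Matrix n n ℂ} {Γ : Matrix ι ι ℂ}
    {r : ι → ℂ} (hr : r ᵥ* Γ = 0) (hΓ : Γ *ᵥ 1 = 0) {l : ℂ} {v : ι × n → ℂ} (hv : v ≠ 0)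
    (hMv : ((1 : Matrix ι ι ℂ) ⊗ₖ A + Γ ⊗ₖ D) *ᵥ v = l • v)
    (hQv : ((vecMulVec 1 r : Matrix ι ι ℂ) ⊗ₖ (1 : Matrix n n ℂ)) *ᵥ v = 0) :
    ∃ (σ : ℂ) (u : ι → ℂ), u ≠ 0 ∧ Γ *ᵥ u = σ • u ∧ r ⬝ᵥ u = 0 ∧ l ∈ spectrum ℂ (A + σ • D) := by
  have hM : Commute ((1 : Matrix ι ι ℂ) ⊗ₖ A + Γ ⊗ₖ D) (Γ ⊗ₖ 1) := by
    simp [Commute, SemiconjBy, add_mul, mul_add, ← mul_kronecker_mul]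
  have hQ : Commute ((vecMulVec 1 r : Matrix ι ι ℂ) ⊗ₖ (1 : Matrix n n ℂ)) (Γ ⊗ₖ 1) := by
    rw [Commute, SemiconjBy, ← mul_kronecker_mul, ← mul_kronecker_mul, vecMulVec_mul,
      mul_vecMulVec, hr, hΓ, vecMulVec_zero, zero_vecMulVec]
  obtain ⟨σ, x, hx, hMx, hQx, hGx⟩ := exists_common_eigenvector hM hQ hv hMv hQv
  obtain ⟨X, rfl⟩ := vec_bijective.surjective x
  simp only [add_mulVec, kronecker_mulVec_vec, ← vec_add, ← vec_smul, vec_inj, vec_eq_zero_iff,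
    transpose_one, Matrix.mul_one, Matrix.one_mul, transpose_vecMulVec, mul_vecMulVec]
    at hMx hGx hQx
  obtain ⟨k, i, hki⟩ : ∃ k i, X k i ≠ 0 := by
    by_contra! h
    exact hx (congrArg vec (Matrix.ext h))
  have hMX : (A + σ • D) * X = l • X := by
    rw [← hMx, Matrix.mul_assoc D, hGx, Matrix.add_mul, Matrix.smul_mul, Matrix.mul_smul]
  have hcol : (A + σ • D) *ᵥ X.col i = l • X.col i := congrArg (·.col i) hMX
  have hrow : Γ *ᵥ X.row k = σ • X.row k := by
    rw [← vecMul_transpose]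
    exact congrArg (·.row k) hGx
  have hr_row : r ⬝ᵥ X.row k = 0 := by
    have hXr : (X *ᵥ r) k = 0 := by simpa using congrFun (congrFun hQx k) i
    rwa [dotProduct_comm]
  exact ⟨σ, X.row k, fun h => hki (congrFun h i), hrow, hr_row,
    mem_spectrum_iff_exists_mulVec_eq_smul.2 ⟨X.col i, fun h => hki (congrFun h k), hcol⟩⟩

theorem tendsto_exp_one_kronecker_add_kronecker_sub
    {A D : Matrix n n ℂ} {Γ : Matrix ι ι ℂ} {r : ι → ℂ}
    (hΓ : Γ *ᵥ 1 = 0) (hr : r ᵥ* Γ = 0) (hr1 : r ⬝ᵥ 1 = 1)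
    (h : ∀ (σ : ℂ) u, u ≠ 0 → Γ *ᵥ u = σ • u → r ⬝ᵥ u = 0 → IsHurwitz (A + σ • D)) :
    Tendsto (fun t : ℝ => NormedSpace.exp (t • ((1 : Matrix ι ι ℂ) ⊗ₖ A + Γ ⊗ₖ D)) -
      vecMulVec 1 r ⊗ₖ NormedSpace.exp (t • A)) atTop (𝓝 0) := by
  let M := (1 : Matrix ι ι ℂ) ⊗ₖ A + Γ ⊗ₖ D
  let P : Matrix ι ι ℂ := vecMulVec 1 r
  have hPP : P * P = P := by
    rw [vecMulVec_mul_vecMulVec, hr1, one_smul]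
  have hPΓ : P * Γ = 0 := by rw [vecMulVec_mul, hr, vecMulVec_zero]
  have hΓP : Γ * P = 0 := by rw [mul_vecMulVec, hΓ, zero_vecMulVec]
  have hMQ : M * (P ⊗ₖ 1) = P ⊗ₖ A := by simp [M, add_mul, ← mul_kronecker_mul, hΓP]
  have hQM : (P ⊗ₖ 1) * M = P ⊗ₖ A := by simp [M, mul_add, ← mul_kronecker_mul, hPΓ]
  have hexp (t : ℝ) : NormedSpace.exp (t • M) * (P ⊗ₖ 1) = P ⊗ₖ NormedSpace.exp (t • A) := by
    have hsemiconj : SemiconjBy (P ⊗ₖ 1) ((1 : Matrix ι ι ℂ) ⊗ₖ (t • A)) (t • M) := by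
      rw [SemiconjBy, smul_mul_assoc, hMQ, ← mul_kronecker_mul, mul_one, one_mul, kronecker_smul]
    rw [← (semiconjBy_exp hsemiconj).eq, exp_one_kronecker, ← mul_kronecker_mul, mul_one, one_mul]
  change Tendsto (fun t : ℝ => NormedSpace.exp (t • M) - P ⊗ₖ NormedSpace.exp (t • A)) _ _
  have hdiff (t : ℝ) : NormedSpace.exp (t • M) - P ⊗ₖ NormedSpace.exp (t • A) =
      NormedSpace.exp (t • M) * (1 - P ⊗ₖ 1) := by rw [mul_sub, mul_one, hexp]
  simp_rw [hdiff]
  refine tendsto_exp_smul_mul_one_sub ?_ (hMQ.trans hQM.symm) fun l v hv hMv hQv => ?_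
  · rw [IsIdempotentElem, ← mul_kronecker_mul, hPP, one_mul]
  · obtain ⟨σ, u, hu, hΓu, hru, hl⟩ :=
      exists_eigenvector_of_kronecker_mulVec_eq_smul hr hΓ hv hMv hQv
    exact h σ u hu hΓu hru l hl

end Synchronization

section Interconnection

variable {p : ℕ} {Γ : Matrix (Fin p) (Fin p) ℝ}

theorem re_neg_or_eq_zero_of_norm_sub_le {σ : ℂ} {d : ℝ} (h : ‖σ - d‖ ≤ -d) :
    σ.re < 0 ∨ σ = 0 := by
  have hd : 0 ≤ -d := (norm_nonneg _).trans h
  have hsq : (σ.re - d) * (σ.re - d) + σ.im * σ.im ≤ (-d) ^ 2 := by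
    simpa [Complex.sq_norm, Complex.normSq_apply] using pow_le_pow_left₀ (norm_nonneg _) h 2
  refine or_iff_not_imp_left.2 fun hre => ?_
  have hdre : 0 ≤ -d * σ.re := mul_nonneg hd (not_lt.1 hre)
  exact Complex.ext (pow_eq_zero_iff two_ne_zero |>.1 (by nlinarith))
    (pow_eq_zero_iff two_ne_zero |>.1 (by nlinarith))

theorem IsInterconnection.re_neg_or_eq_zero (hΓ : IsInterconnection Γ) {σ : ℂ} {u : Fin p → ℂ}
    (hu : u ≠ 0) (h : Γ.map Complex.ofReal *ᵥ u = σ • u) : σ.re < 0 ∨ σ = 0 := by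
  have hσ : Module.End.HasEigenvalue (toLin' (Γ.map Complex.ofReal)) σ := by
    rw [Module.End.hasEigenvalue_iff_mem_spectrum, spectrum_toLin']
    exact mem_spectrum_iff_exists_mulVec_eq_smul.2 ⟨u, hu, h⟩
  obtain ⟨k, hk⟩ := eigenvalue_mem_ball hσ
  have hradius : ∑ j ∈ Finset.univ.erase k, ‖Γ.map Complex.ofReal k j‖ = -Γ k k := by
    rw [eq_neg_iff_add_eq_zero, ← hΓ.2 k, ← Finset.sum_erase_add _ _ (Finset.mem_univ k)]
    congr 1
    refine Finset.sum_congr rfl fun j hj => ?_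
    rw [map_apply, Complex.norm_real,
      Real.norm_of_nonneg (hΓ.1 k j (Finset.ne_of_mem_erase hj).symm)]
  rw [hradius, mem_closedBall_iff_norm] at hk
  exact re_neg_or_eq_zero_of_norm_sub_le hk

theorem IsInterconnection.eq_of_forall_le (hΓ : IsInterconnection Γ) {u : Fin p → ℝ}
    (hu : Γ *ᵥ u = 0) {i j : Fin p} (hi : ∀ l, u l ≤ u i) (hij : 0 < Γ i j) : u j = u i := by
  have hnonneg : ∀ l ∈ Finset.univ, 0 ≤ Γ i l * (u i - u l) := fun l _ => by
    obtain rfl | hne := eq_or_ne i l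
    · simp
    · exact mul_nonneg (hΓ.1 i l hne) (sub_nonneg.2 (hi l))
  have hsum : ∑ l, Γ i l * (u i - u l) = 0 := by
    have hui : ∑ l, Γ i l * u l = 0 := congrFun hu i
    simp_rw [mul_sub, Finset.sum_sub_distrib, ← Finset.sum_mul, hΓ.2 i, hui, zero_mul, sub_zero]
  have hzero := (Finset.sum_eq_zero_iff_of_nonneg hnonneg).1 hsum j (Finset.mem_univ j)
  exact (sub_eq_zero.1 ((mul_eq_zero.1 hzero).resolve_left hij.ne')).symm

theorem IsInterconnection.le_of_forall_reflTransGen (hΓ : IsInterconnection Γ) {u : Fin p → ℝ}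
    (hu : Γ *ᵥ u = 0) {k : Fin p}
    (hk : ∀ i, Relation.ReflTransGen (fun a b => 0 < Γ a b) i k) (i : Fin p) : u i ≤ u k := by
  have : Nonempty (Fin p) := ⟨k⟩
  obtain ⟨m, hm⟩ := Finite.exists_max u
  have hpath : ∀ l, u l ≤ u k := by
    induction hk m using Relation.ReflTransGen.head_induction_on with
    | refl => exact hm
    | head hab _ ih => exact ih (by rwa [hΓ.eq_of_forall_le hu hm hab])
  exact hpath i

theorem IsConnectedInterconnection.exists_eq_const (hΓ : IsConnectedInterconnection Γ)
    {u : Fin p → ℂ} (hu : Γ.map Complex.ofReal *ᵥ u = 0) : ∃ c, u = fun _ => c := by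
  obtain ⟨hΓ, k, hk⟩ := hΓ
  have hconst {w : Fin p → ℝ} (hw : Γ *ᵥ w = 0) (i : Fin p) : w i = w k :=
    le_antisymm (hΓ.le_of_forall_reflTransGen hw hk i) <| neg_le_neg_iff.1 <|
      hΓ.le_of_forall_reflTransGen (u := -w) (by rw [mulVec_neg, hw, neg_zero]) hk i
  refine ⟨u k, funext fun i => Complex.ext ?_ ?_⟩
  · exact hconst (funext fun j => by rw [← re_map_ofReal_mulVec, hu]; rfl) i
  · exact hconst (funext fun j => by rw [← im_map_ofReal_mulVec, hu]; rfl) i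

theorem IsConnectedInterconnection.re_neg_of_dotProduct_eq_zero
    (hΓ : IsConnectedInterconnection Γ) {r u : Fin p → ℂ} (hr : r ⬝ᵥ 1 = 1) (hu : u ≠ 0)
    (hru : r ⬝ᵥ u = 0) {σ : ℂ} (h : Γ.map Complex.ofReal *ᵥ u = σ • u) : σ.re < 0 := by
  refine (hΓ.1.re_neg_or_eq_zero hu h).resolve_right fun hσ => hu ?_
  rw [hσ, zero_smul] at h
  obtain ⟨c, rfl⟩ := hΓ.exists_eq_const h
  have hc : r ⬝ᵥ (c • 1) = 0 := by simpa [Pi.smul_def] using hru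
  rw [dotProduct_smul, hr, smul_eq_mul, mul_one] at hc
  rw [hc]
  rfl

end Interconnection

section Detectability

variable {n m : Type*} [Fintype n] [DecidableEq n]

/-- Detectability of the pair `(C, A)`: a trajectory of `ẋ = A x` that is invisible at the output
`C x` tends to zero. -/
def IsDetectable (C : Matrix m n ℝ) (A : Matrix n n ℝ) : Prop :=
  ∀ x : n → ℝ, (∀ t : ℝ, 0 ≤ t → C *ᵥ (NormedSpace.exp (t • A) *ᵥ x) = 0) →
    Tendsto (fun t : ℝ => NormedSpace.exp (t • A) *ᵥ x) atTop (𝓝 0)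

theorem IsDetectable.tendsto_map_ofReal {C : Matrix m n ℝ} {A : Matrix n n ℝ}
    (h : IsDetectable C A) {z : n → ℂ}
    (hz : ∀ t : ℝ, 0 ≤ t → C.map Complex.ofReal *ᵥ
      (NormedSpace.exp (t • A.map Complex.ofReal) *ᵥ z) = 0) :
    Tendsto (fun t : ℝ => NormedSpace.exp (t • A.map Complex.ofReal) *ᵥ z) atTop (𝓝 0) := by
  simp_rw [← map_ofReal_exp_smul] at hz ⊢
  have hre := h (fun i => (z i).re) fun t ht => by
    ext i
    have hi := congrArg Complex.re (congrFun (hz t ht) i)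
    simp_rw [re_map_ofReal_mulVec] at hi
    exact hi
  have him := h (fun i => (z i).im) fun t ht => by
    ext i
    have hi := congrArg Complex.im (congrFun (hz t ht) i)
    simp_rw [im_map_ofReal_mulVec] at hi
    exact hi
  refine tendsto_pi_nhds.2 fun i => ?_
  have hlim := (Complex.continuous_ofReal.tendsto 0).comp (tendsto_pi_nhds.1 hre i) |>.add <|
    ((Complex.continuous_ofReal.tendsto 0).comp (tendsto_pi_nhds.1 him i)).mul_const Complex.I
  simpa only [Pi.zero_apply, Function.comp_def, ← re_map_ofReal_mulVec, ← im_map_ofReal_mulVec,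
    Complex.re_add_im, Complex.ofReal_zero, zero_mul, add_zero] using hlim

theorem IsDetectable.eq_zero_of_mulVec_eq_smul {C : Matrix m n ℝ} {A : Matrix n n ℝ}
    (h : IsDetectable C A) {μ : ℂ} (hμ : 0 ≤ μ.re) {z : n → ℂ}
    (hAz : A.map Complex.ofReal *ᵥ z = μ • z) (hCz : C.map Complex.ofReal *ᵥ z = 0) : z = 0 := by
  have hlim := h.tendsto_map_ofReal (z := z) fun t _ => by
    rw [exp_smul_mulVec_of_mulVec_eq_smul hAz, mulVec_smul, hCz, smul_zero]
  simp_rw [exp_smul_mulVec_of_mulVec_eq_smul hAz] at hlim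
  refine norm_le_zero_iff.1 (ge_of_tendsto (norm_zero (E := n → ℂ) ▸ hlim.norm) ?_)
  filter_upwards [eventually_ge_atTop 0] with t ht
  rw [norm_smul, Complex.norm_exp, Complex.re_ofReal_mul]
  exact le_mul_of_one_le_left (norm_nonneg z) (Real.one_le_exp (mul_nonneg ht hμ))

end Detectability

section NeutralStability

open scoped ComplexOrder

variable {n m : Type*} [Fintype n]

theorem eq_zero_of_conjTranspose_mulVec_eq_zero {N : Matrix n n ℂ}
    (hN : ∀ v, (N * N) *ᵥ v = 0 → N *ᵥ v = 0) {w : n → ℂ} (hw : Nᴴ *ᵥ w = 0)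
    (hort : ∀ v, N *ᵥ v = 0 → star w ⬝ᵥ v = 0) : w = 0 := by
  have hdisjoint : Disjoint (LinearMap.range N.mulVecLin) (LinearMap.ker N.mulVecLin) := by
    rw [LinearMap.disjoint_ker]
    rintro _ ⟨v, rfl⟩ hv
    exact hN v (by simpa using hv)
  have htop := Submodule.eq_top_of_disjoint _ _
    (LinearMap.finrank_range_add_finrank_ker N.mulVecLin).ge hdisjoint
  obtain ⟨_, ⟨a, rfl⟩, v, hv, hav⟩ := Submodule.mem_sup.1 (htop ▸ Submodule.mem_top (x := w))
  have hrange : star w ⬝ᵥ (N *ᵥ a) = 0 := by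
    rw [dotProduct_mulVec, ← star_star (star w ᵥ* N), star_vecMul, star_star, hw, star_zero,
      zero_dotProduct]
  rw [← dotProduct_star_self_eq_zero]
  nth_rw 2 [← hav]
  rw [dotProduct_add, mulVecLin_apply, hrange, hort v hv, add_zero]

/-- `Y` plays the role of a Gramian of the eigenvectors of `A` with purely imaginary eigenvalue: it
is positive semidefinite, solves the Lyapunov equation `A Y + Y A* = 0`, and each vector in its
kernel is orthogonal to all these eigenvectors. Used as the gain `L = Y C*`, it makes `A + σ L C`
Hurwitz on the half-plane `Re σ < 0`. -/
structure IsNeutralGramian (A Y : Matrix n n ℂ) : Prop where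
  posSemidef : Y.PosSemidef
  add_eq_zero : A * Y + Y * Aᴴ = 0
  dotProduct_eq_zero : ∀ w, Y *ᵥ w = 0 →
    ∀ (μ : ℂ) v, μ.re = 0 → A *ᵥ v = μ • v → star w ⬝ᵥ v = 0

theorem mul_vecMulVec_star_add_eq_zero {A : Matrix n n ℂ} {μ : ℂ} (hμ : μ.re = 0) {v : n → ℂ}
    (hv : A *ᵥ v = μ • v) : A * vecMulVec v (star v) + vecMulVec v (star v) * Aᴴ = 0 := by
  have hstar : μ + star μ = 0 := by
    simp [Complex.add_conj, hμ]
  rw [mul_vecMulVec, vecMulVec_mul, ← star_mulVec, hv, star_smul, smul_vecMulVec,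
    vecMulVec_smul, ← add_smul, hstar, zero_smul]

theorem exists_isNeutralGramian (A : Matrix n n ℂ) : ∃ Y, IsNeutralGramian A Y := by
  let S : Set (n → ℂ) := {v | ∃ μ : ℂ, μ.re = 0 ∧ A *ᵥ v = μ • v}
  obtain ⟨T, hTS, hspan⟩ := (Submodule.fg_span_iff_fg_span_finset_subset S).1
    (IsNoetherian.noetherian (Submodule.span ℂ S))
  have hY : ∀ v ∈ T, (vecMulVec v (star v)).PosSemidef := fun v _ =>
    posSemidef_vecMulVec_self_star v
  refine ⟨∑ v ∈ T, vecMulVec v (star v), posSemidef_sum T hY, ?_, fun w hw μ v hμ hv => ?_⟩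
  · rw [Finset.mul_sum, Finset.sum_mul, ← Finset.sum_add_distrib]
    refine Finset.sum_eq_zero fun v hv => ?_
    obtain ⟨μ, hμ, hAv⟩ := hTS hv
    exact mul_vecMulVec_star_add_eq_zero hμ hAv
  · have hsum : ∑ v ∈ T, star w ⬝ᵥ (vecMulVec v (star v) *ᵥ w) = 0 := by
      rw [← dotProduct_sum, ← sum_mulVec, hw, dotProduct_zero]
    have hT : (T : Set (n → ℂ)) ⊆ LinearMap.ker (dotProductBilin ℂ ℂ (star w)) := fun v hvT => by
      have hzero := (Finset.sum_eq_zero_iff_of_nonneg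
        fun v hv => (hY v hv).dotProduct_mulVec_nonneg w).1 hsum v hvT
      rw [vecMulVec_mulVec, dotProduct_smul, star_dotProduct] at hzero
      exact (CStarRing.mul_star_self_eq_zero_iff _).1 hzero
    exact Submodule.span_le.2 hT (hspan ▸ Submodule.subset_span ⟨μ, hμ, hv⟩)

theorem mulVec_eq_zero_of_add_mulVec_eq_zero {Y Z : Matrix n n ℂ} (hY : Y.PosSemidef)
    (hZ : Z.PosSemidef) {w : n → ℂ} (hw : (Y + Z) *ᵥ w = 0) : Y *ᵥ w = 0 := by
  rw [← hY.dotProduct_mulVec_zero_iff]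
  refine ((add_eq_zero_iff_of_nonneg (hY.dotProduct_mulVec_nonneg w)
    (hZ.dotProduct_mulVec_nonneg w)).1 ?_).1
  rw [← dotProduct_add, ← add_mulVec, hw, dotProduct_zero]

theorem exists_real_isNeutralGramian (A : Matrix n n ℝ) :
    ∃ Y : Matrix n n ℝ, IsNeutralGramian (A.map Complex.ofReal) (Y.map Complex.ofReal) := by
  obtain ⟨Z, hZ⟩ := exists_isNeutralGramian (A.map Complex.ofReal)
  have hY : ((2 : ℝ) • Z.map Complex.re).map Complex.ofReal = Z + Zᵀ := by
    ext i j
    have hconj : Z j i = star (Z i j) := (hZ.posSemidef.isHermitian.apply j i).symm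
    simp [hconj, Complex.add_conj]
  refine ⟨(2 : ℝ) • Z.map Complex.re, hY ▸ hZ.posSemidef.add hZ.posSemidef.transpose, ?_, ?_⟩
  · have htranspose := congrArg transpose hZ.add_eq_zero
    rw [conjTranspose_map_ofReal, transpose_add, transpose_mul, transpose_mul,
      transpose_transpose, transpose_zero, add_comm] at htranspose
    rw [hY, mul_add, add_mul, add_add_add_comm, hZ.add_eq_zero, conjTranspose_map_ofReal,
      htranspose, add_zero]
  · intro w hw
    rw [hY] at hw
    exact hZ.dotProduct_eq_zero w <|
      mulVec_eq_zero_of_add_mulVec_eq_zero hZ.posSemidef hZ.posSemidef.transpose hw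

theorem re_star_dotProduct_mulVec_eq_zero {K : Matrix n n ℂ} (hK : K + Kᴴ = 0) (w : n → ℂ) :
    (star w ⬝ᵥ K *ᵥ w).re = 0 := by
  have hstar : star (star w ⬝ᵥ K *ᵥ w) = -(star w ⬝ᵥ K *ᵥ w) := by
    rw [← star_dotProduct, star_mulVec, ← dotProduct_mulVec, eq_neg_of_add_eq_zero_right hK,
      neg_mulVec, dotProduct_neg]
  have hre := congrArg Complex.re hstar
  rw [Complex.star_def, Complex.conj_re, Complex.neg_re] at hre
  linarith

variable [Fintype m] {A Y : Matrix n n ℂ} {C : Matrix m n ℂ}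

theorem conjTranspose_add_smul (hY : Y.IsHermitian) (σ : ℂ) :
    (A + σ • (Y * Cᴴ * C))ᴴ = Aᴴ + star σ • (Cᴴ * (C * Y)) := by
  rw [conjTranspose_add, conjTranspose_smul, conjTranspose_mul, conjTranspose_mul,
    conjTranspose_conjTranspose, hY.eq]

theorem IsNeutralGramian.mul_dotProduct_eq (hY : IsNeutralGramian A Y) {σ μ : ℂ} {w : n → ℂ}
    (hw : (A + σ • (Y * Cᴴ * C))ᴴ *ᵥ w = μ • w) :
    μ * (star w ⬝ᵥ Y *ᵥ w) = star w ⬝ᵥ (Y * Aᴴ) *ᵥ w +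
      star σ * (star (C *ᵥ Y *ᵥ w) ⬝ᵥ C *ᵥ Y *ᵥ w) := by
  have houtput : star (C *ᵥ Y *ᵥ w) = star w ᵥ* (Y * Cᴴ) := by
    rw [mulVec_mulVec, star_mulVec, conjTranspose_mul, hY.posSemidef.isHermitian.eq]
  rw [← smul_eq_mul, ← dotProduct_smul, ← mulVec_smul, ← hw,
    conjTranspose_add_smul hY.posSemidef.isHermitian, add_mulVec, mulVec_add,
    dotProduct_add, mulVec_mulVec, houtput, ← dotProduct_mulVec, smul_mulVec, mulVec_smul,
    dotProduct_smul, smul_eq_mul]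
  simp only [mulVec_mulVec, Matrix.mul_assoc]

theorem IsNeutralGramian.re_mul_eq (hY : IsNeutralGramian A Y) {σ μ : ℂ} {w : n → ℂ}
    (hw : (A + σ • (Y * Cᴴ * C))ᴴ *ᵥ w = μ • w) :
    μ.re * (star w ⬝ᵥ Y *ᵥ w).re = σ.re * (star (C *ᵥ Y *ᵥ w) ⬝ᵥ C *ᵥ Y *ᵥ w).re := by
  have hskew : (star w ⬝ᵥ (Y * Aᴴ) *ᵥ w).re = 0 := re_star_dotProduct_mulVec_eq_zero
    (by rw [conjTranspose_mul, conjTranspose_conjTranspose, hY.posSemidef.isHermitian.eq,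
      add_comm, hY.add_eq_zero]) w
  have hstate := (Complex.nonneg_iff.1 (hY.posSemidef.dotProduct_mulVec_nonneg w)).2
  have houtput := (Complex.nonneg_iff.1 (dotProduct_star_self_nonneg (C *ᵥ Y *ᵥ w))).2
  have hre := congrArg Complex.re (hY.mul_dotProduct_eq hw)
  rw [Complex.add_re, hskew, Complex.mul_re, Complex.mul_re, ← hstate, ← houtput] at hre
  simpa using hre

theorem IsNeutralGramian.mulVec_eq_zero (hY : IsNeutralGramian A Y) {σ μ : ℂ} (hσ : σ.re < 0)
    (hμ : 0 ≤ μ.re) {w : n → ℂ} (hw : (A + σ • (Y * Cᴴ * C))ᴴ *ᵥ w = μ • w) :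
    C *ᵥ Y *ᵥ w = 0 := by
  obtain ⟨hre, him⟩ := Complex.nonneg_iff.1 (dotProduct_star_self_nonneg (C *ᵥ Y *ᵥ w))
  have hstate : 0 ≤ σ.re * (star (C *ᵥ Y *ᵥ w) ⬝ᵥ C *ᵥ Y *ᵥ w).re :=
    hY.re_mul_eq hw ▸ mul_nonneg hμ
      (Complex.nonneg_iff.1 (hY.posSemidef.dotProduct_mulVec_nonneg w)).1
  have hle := nonpos_of_mul_nonneg_right hstate hσ
  exact dotProduct_star_self_eq_zero.1 (Complex.ext (le_antisymm hle hre) him.symm)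

variable [DecidableEq n]

/-- Neutral stability of a complex matrix: no eigenvalue has positive real part, and the ones with
zero real part are semisimple, which is expressed through the kernels of `A - μ` and
`(A - μ)²`. -/
def IsNeutrallyStable (A : Matrix n n ℂ) : Prop :=
  (∀ μ ∈ spectrum ℂ A, μ.re ≤ 0) ∧ ∀ μ ∈ spectrum ℂ A, μ.re = 0 →
    ∀ v : n → ℂ, ((A - μ • 1) * (A - μ • 1)) *ᵥ v = 0 → (A - μ • 1) *ᵥ v = 0

theorem star_mem_spectrum_iff_exists_conjTranspose_mulVec {M : Matrix n n ℂ} {μ : ℂ} :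
    star μ ∈ spectrum ℂ M ↔ ∃ w, w ≠ 0 ∧ Mᴴ *ᵥ w = μ • w := by
  rw [← mem_spectrum_iff_exists_mulVec_eq_smul, ← star_eq_conjTranspose, spectrum.map_star,
    Set.mem_star]

theorem IsNeutralGramian.isHurwitz_add_smul
    (hY : IsNeutralGramian A Y) (hA : IsNeutrallyStable A)
    (hC : ∀ (μ : ℂ) v, μ.re = 0 → A *ᵥ v = μ • v → C *ᵥ v = 0 → v = 0) {σ : ℂ} (hσ : σ.re < 0) :
    IsHurwitz (A + σ • (Y * Cᴴ * C)) := by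
  intro ν hν
  obtain ⟨μ, rfl⟩ : ∃ μ, star μ = ν := ⟨star ν, star_star ν⟩
  obtain ⟨w, hw0, hw⟩ := star_mem_spectrum_iff_exists_conjTranspose_mulVec.1 hν
  refine not_le.1 fun (hμ : 0 ≤ μ.re) => hw0 ?_
  have hCYw := hY.mulVec_eq_zero hσ hμ hw
  have hAw : Aᴴ *ᵥ w = μ • w := by
    rw [← hw, conjTranspose_add_smul hY.posSemidef.isHermitian, add_mulVec, smul_mulVec,
      ← mulVec_mulVec, ← mulVec_mulVec, hCYw, mulVec_zero, smul_zero, add_zero]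
  have hspec : star μ ∈ spectrum ℂ A :=
    star_mem_spectrum_iff_exists_conjTranspose_mulVec.2 ⟨w, hw0, hAw⟩
  have hre : μ.re = 0 := le_antisymm (hA.1 (star μ) hspec) hμ
  have hAYw : A *ᵥ Y *ᵥ w = -μ • Y *ᵥ w := by
    rw [mulVec_mulVec, eq_neg_of_add_eq_zero_left hY.add_eq_zero, neg_mulVec, ← mulVec_mulVec,
      hAw, mulVec_smul, neg_smul]
  have hYw : Y *ᵥ w = 0 := hC (-μ) _ (by rw [Complex.neg_re, hre, neg_zero]) hAYw hCYw
  refine eq_zero_of_conjTranspose_mulVec_eq_zero (hA.2 (star μ) hspec hre) ?_ fun v hv =>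
    hY.dotProduct_eq_zero w hYw (star μ) v hre ?_
  · rw [conjTranspose_sub, conjTranspose_smul, star_star, conjTranspose_one, sub_mulVec, hAw,
      smul_mulVec, one_mulVec, sub_self]
  · rwa [sub_mulVec, smul_mulVec, one_mulVec, sub_eq_zero] at hv

theorem exists_isHurwitz_add_smul {A : Matrix n n ℝ} {C : Matrix m n ℝ}
    (hA : IsNeutrallyStable (A.map Complex.ofReal)) (hC : IsDetectable C A) :
    ∃ L : Matrix n m ℝ, ∀ σ : ℂ, σ.re < 0 →
      IsHurwitz (A.map Complex.ofReal + σ • (L * C).map Complex.ofReal) := by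
  obtain ⟨Y, hY⟩ := exists_real_isNeutralGramian A
  refine ⟨Y * Cᵀ, fun σ hσ => ?_⟩
  have hL : (Y * Cᵀ * C).map Complex.ofReal =
      Y.map Complex.ofReal * (C.map Complex.ofReal)ᴴ * C.map Complex.ofReal := by
    ext i j
    simp [mul_apply]
  rw [hL]
  exact hY.isHurwitz_add_smul hA
    (fun μ v hμ => hC.eq_zero_of_mulVec_eq_smul hμ.ge) hσ

end NeutralStability

section RealSynchronization

theorem kronecker_mulVec_apply {R ι κ m n : Type*} [NonUnitalSemiring R] [Fintype κ] [Fintype n]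
    (G : Matrix ι κ R) (B : Matrix m n R) (x : κ × n → R) (i : ι) (k : m) :
    ((G ⊗ₖ B) *ᵥ x) (i, k) = ∑ j, G i j * (B *ᵥ fun l => x (j, l)) k := by
  simp_rw [mulVec, dotProduct, Fintype.sum_prod_type, kroneckerMap_apply, Finset.mul_sum, mul_assoc]

theorem IsConnectedInterconnection.tendsto_exp_kronecker_sub {n : Type*} [Fintype n]
    [DecidableEq n] {p : ℕ} {Γ : Matrix (Fin p) (Fin p) ℝ} (hΓ : IsConnectedInterconnection Γ)
    {r : Fin p → ℝ} (hr : r ᵥ* Γ = 0) (hr1 : ∑ i, r i = 1) {A D : Matrix n n ℝ}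
    (h : ∀ σ : ℂ, σ.re < 0 → IsHurwitz (A.map Complex.ofReal + σ • D.map Complex.ofReal)) :
    Tendsto (fun t : ℝ =>
      NormedSpace.exp (t • ((1 : Matrix (Fin p) (Fin p) ℝ) ⊗ₖ A + Γ ⊗ₖ D)) -
        vecMulVec 1 r ⊗ₖ NormedSpace.exp (t • A)) atTop (𝓝 0) := by
  let rℂ : Fin p → ℂ := fun i => r i
  have hrℂ : rℂ ᵥ* Γ.map Complex.ofReal = 0 := by
    ext j
    simpa [rℂ, vecMul, dotProduct] using congrArg Complex.ofReal (congrFun hr j)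
  have hr1ℂ : rℂ ⬝ᵥ 1 = 1 := by
    simpa [rℂ, dotProduct_one] using congrArg Complex.ofReal hr1
  have hΓℂ : Γ.map Complex.ofReal *ᵥ 1 = 0 := by
    ext i
    simpa [mulVec, dotProduct] using congrArg Complex.ofReal (hΓ.1.2 i)
  have hlim := tendsto_exp_one_kronecker_add_kronecker_sub hΓℂ hrℂ hr1ℂ
    fun σ _ hu hΓu hru => h σ (hΓ.re_neg_of_dotProduct_eq_zero hr1ℂ hu hru hΓu)
  have hsum : ((1 : Matrix (Fin p) (Fin p) ℝ) ⊗ₖ A + Γ ⊗ₖ D).map Complex.ofReal =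
      (1 : Matrix (Fin p) (Fin p) ℂ) ⊗ₖ A.map Complex.ofReal +
        Γ.map Complex.ofReal ⊗ₖ D.map Complex.ofReal := by
    ext i j
    simp [one_apply, apply_ite Complex.ofReal]
  simp_rw [← hsum, ← map_ofReal_exp_smul] at hlim
  refine tendsto_pi_nhds.2 fun i => tendsto_pi_nhds.2 fun j => ?_
  have hre := (Complex.continuous_re.tendsto 0).comp
    (tendsto_pi_nhds.1 (tendsto_pi_nhds.1 hlim i) j)
  simpa [Function.comp_def, rℂ, vecMulVec_apply] using hre

end RealSynchronization

/-- If `A` is neutrally stable and `(C, A)` is detectable, then there is a feedback law `L`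
synchronizing the array `ẋᵢ = Axᵢ + LC Σⱼ γᵢⱼ(xⱼ - xᵢ)` for every connected
interconnection `Γ`: the solution `x(t) = exp(t(I_p ⊗ A + Γ ⊗ LC)) x(0)` converges to
`(1rᵀ ⊗ exp(tA)) x(0)`, and each block synchronizes to `x̄(t) = (rᵀ ⊗ exp(tA)) x(0)`. -/
theorem neutrally_stable_detectable_synchronizable
    (n m : ℕ) (A : Matrix (Fin n) (Fin n) ℝ) (C : Matrix (Fin m) (Fin n) ℝ)
    (hstab : ∀ μ ∈ spectrum ℂ (A.map Complex.ofReal), μ.re ≤ 0)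
    (hsemisimple : ∀ μ ∈ spectrum ℂ (A.map Complex.ofReal), μ.re = 0 →
      ∀ v : Fin n → ℂ,
        ((A.map Complex.ofReal - μ • 1) * (A.map Complex.ofReal - μ • 1)) *ᵥ v = 0 →
          (A.map Complex.ofReal - μ • 1) *ᵥ v = 0)
    (hdet : ∀ x : Fin n → ℝ,
      (∀ t : ℝ, 0 ≤ t → C *ᵥ (NormedSpace.exp (t • A) *ᵥ x) = 0) →
        Tendsto (fun t : ℝ => NormedSpace.exp (t • A) *ᵥ x) atTop (nhds 0)) :
    ∃ L : Matrix (Fin n) (Fin m) ℝ,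
      ∀ (p : ℕ) (Γ : Matrix (Fin p) (Fin p) ℝ), IsConnectedInterconnection Γ →
        ∀ r : Fin p → ℝ, r ᵥ* Γ = 0 → ∑ i, r i = 1 →
          ∀ x0 : Fin p × Fin n → ℝ,
            Tendsto (fun t : ℝ =>
                NormedSpace.exp (t • ((1 : Matrix (Fin p) (Fin p) ℝ) ⊗ₖ A + Γ ⊗ₖ (L * C)))
                    *ᵥ x0
                  - (vecMulVec (fun _ => (1 : ℝ)) r ⊗ₖ NormedSpace.exp (t • A)) *ᵥ x0)
              atTop (nhds 0) ∧
            ∀ i : Fin p,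
              Tendsto (fun t : ℝ => (fun k : Fin n =>
                  (NormedSpace.exp
                      (t • ((1 : Matrix (Fin p) (Fin p) ℝ) ⊗ₖ A + Γ ⊗ₖ (L * C))) *ᵥ x0) (i, k)
                    - ∑ j : Fin p, r j * (NormedSpace.exp (t • A) *ᵥ fun l => x0 (j, l)) k))
                atTop (nhds 0) := by
  obtain ⟨L, hL⟩ := exists_isHurwitz_add_smul ⟨hstab, hsemisimple⟩ hdet
  refine ⟨L, fun p Γ hΓ r hr hr1 x0 => ?_⟩
  have hlim := hΓ.tendsto_exp_kronecker_sub hr hr1 hL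
  have hcont : Continuous fun M : Matrix (Fin p × Fin n) (Fin p × Fin n) ℝ => M *ᵥ x0 :=
    continuous_id.matrix_mulVec continuous_const
  have hsync := (hcont.tendsto 0).comp hlim
  simp only [Function.comp_def, sub_mulVec, zero_mulVec] at hsync
  refine ⟨hsync, fun i => tendsto_pi_nhds.2 fun k => ?_⟩
  simpa [kronecker_mulVec_apply, vecMulVec_apply] using tendsto_pi_nhds.1 hsync (i, k)
end
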